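/- Let Y be a standard one-dimensional Gaussian random variable and 0 < ε < ε' < 1. Then ( (1−ε')·CVaR_{ε'}(Y) − (1−ε)·CVaR_ε(Y) ) / (ε' − ε) = −E[ Y | Y ∈ [VaR_ε(Y), VaR_{ε'}(Y)) ] ≤ −VaR_ε(Y). Consequently, for any δ > 0, c_o := sup_{ε' ∈ (ε,1)} ( −δ + (1−ε')·CVaR_{ε'}(Y) − (1−ε)·CVaR_ε(Y) ) / (ε' − ε) satisfies c_o ≤ −VaR_ε(Y). -/

import Mathlib

open MeasureTheory Set ProbabilityTheory
open scoped Classical ENNReal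

noncomputable section

/-- Value-at-risk at level `β`. -/
noncomputable def VaR {Ω : Type*} [MeasurableSpace Ω] (P : Measure Ω) (X : Ω → ℝ) (β : ℝ) : ℝ :=
  sInf {t : ℝ | β ≤ (P {ω | X ω ≤ t}).toReal}

/-- Conditional value-at-risk at level `β`. -/
noncomputable def CVaR {Ω : Type*} [MeasurableSpace Ω] (P : Measure Ω) (X : Ω → ℝ) (β : ℝ) : ℝ :=
  ⨅ γ : ℝ, γ + (1 - β)⁻¹ * ∫ ω, max (X ω - γ) 0 ∂P

/-!
Write `q_β = VaR_β(Y)` and `F` for the distribution function of `Y`. Since the Gaussian law has no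
atoms, `F` is continuous and `F q_β = β` (`gaussian_Iic_VaR`). For every `γ`,
`(1 - β) γ + E[(Y - γ)⁺] ≥ (1 - β) γ + E[(Y - γ) 1_{Y ≥ q_β}] = E[Y 1_{Y ≥ q_β}]`,
with equality at `γ = q_β`, so `(1 - β) CVaR_β(Y) = E[Y 1_{Y ≥ q_β}]` (`one_sub_mul_CVaR`).
Subtracting this at two levels leaves `-E[Y 1_{q_ε ≤ Y < q_ε'}]`, and the interval has mass
`ε' - ε`; bounding `Y` below by `q_ε` on it gives the inequality. The bound on the supremum follows
termwise, since `-δ < 0`.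
-/

lemma integrable_id_gaussian : Integrable (fun y : ℝ => y) (gaussianReal 0 1) := by
  have h : MemLp id (1 : NNReal) (gaussianReal 0 1) := memLp_id_gaussianReal 1
  rw [ENNReal.coe_one, memLp_one_iff_integrable] at h
  exact h

instance nullSingletonClass_gaussian_zero_one : NullSingletonClass (gaussianReal 0 1) :=
  nullSingletonClass_gaussianReal one_ne_zero

lemma continuous_cdf_gaussian : Continuous (cdf (gaussianReal 0 1)) := by
  rw [continuous_iff_continuousAt]
  intro a
  have hm := (cdf (gaussianReal 0 1)).mono
  rw [hm.continuousAt_iff_leftLim_eq_rightLim, (cdf (gaussianReal 0 1)).rightLim_eq]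
  have h := (cdf (gaussianReal 0 1)).measure_singleton a
  rw [measure_cdf, measure_singleton] at h
  have h' := ENNReal.ofReal_eq_zero.1 h.symm
  exact le_antisymm (hm.leftLim_le le_rfl) (by linarith)

/-- The value-at-risk is an exact quantile: the Gaussian law puts mass `β` on `(-∞, VaR_β]`. -/
lemma gaussian_Iic_VaR {β : ℝ} (h0 : 0 < β) (h1 : β < 1) :
    (gaussianReal 0 1).real (Iic (VaR (gaussianReal 0 1) id β)) = β := by
  have hc := continuous_cdf_gaussian
  have hV : VaR (gaussianReal 0 1) id β = sInf {t : ℝ | β ≤ cdf (gaussianReal 0 1) t} := by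
    unfold VaR
    congr 1
    ext t
    rw [mem_ofPred_eq, mem_ofPred_eq, cdf_eq_real]
    rfl
  rw [hV, ← cdf_eq_real]
  obtain ⟨l, hl⟩ := ((tendsto_cdf_atBot (gaussianReal 0 1)).eventually (gt_mem_nhds h0)).exists
  obtain ⟨u, hu⟩ := ((tendsto_cdf_atTop (gaussianReal 0 1)).eventually (lt_mem_nhds h1)).exists
  obtain ⟨a, ha⟩ := mem_range_of_exists_le_of_exists_ge hc ⟨l, hl.le⟩ ⟨u, hu.le⟩
  have hbdd : BddBelow {t : ℝ | β ≤ cdf (gaussianReal 0 1) t} := by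
    refine ⟨l, fun t ht => ?_⟩
    by_contra! hlt
    have := monotone_cdf (gaussianReal 0 1) hlt.le
    have ht' : β ≤ cdf (gaussianReal 0 1) t := ht
    linarith
  apply le_antisymm
  · calc cdf (gaussianReal 0 1) (sInf {t : ℝ | β ≤ cdf (gaussianReal 0 1) t})
        ≤ cdf (gaussianReal 0 1) a := monotone_cdf _ (csInf_le hbdd ha.ge)
      _ = β := ha
  · exact (isClosed_le continuous_const hc).csInf_mem ⟨a, ha.ge⟩ hbdd

lemma gaussian_Ici_VaR {β : ℝ} (h0 : 0 < β) (h1 : β < 1) :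
    (gaussianReal 0 1).real (Ici (VaR (gaussianReal 0 1) id β)) = 1 - β := by
  rw [← measureReal_congr (Ioi_ae_eq_Ici (μ := gaussianReal 0 1)), ← compl_Iic,
    probReal_compl_eq_one_sub measurableSet_Iic, gaussian_Iic_VaR h0 h1]

/-- The infimum defining `CVaR` is attained at `γ = VaR_β`, which turns it into a tail integral. -/
lemma one_sub_mul_CVaR {β : ℝ} (h0 : 0 < β) (h1 : β < 1) :
    (1 - β) * CVaR (gaussianReal 0 1) id β =
      ∫ y in Ici (VaR (gaussianReal 0 1) id β), y ∂(gaussianReal 0 1) := by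
  have hmass := gaussian_Ici_VaR h0 h1
  set q := VaR (gaussianReal 0 1) id β
  have hβ : 0 < 1 - β := by linarith
  have hi : ∀ γ : ℝ, Integrable (fun y : ℝ => y - γ) (gaussianReal 0 1) :=
    fun γ => integrable_id_gaussian.sub (integrable_const γ)
  have hp : ∀ γ : ℝ, Integrable (fun y : ℝ => max (y - γ) 0) (gaussianReal 0 1) :=
    fun γ => (hi γ).pos_part
  have hsplit : ∀ γ : ℝ, ∫ y in Ici q, (y - γ) ∂(gaussianReal 0 1) =
      (∫ y in Ici q, y ∂(gaussianReal 0 1)) - (1 - β) * γ := by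
    intro γ
    rw [integral_sub integrable_id_gaussian.integrableOn (integrable_const γ), setIntegral_const,
      hmass, smul_eq_mul]
  have hle : ∀ γ : ℝ, ∫ y in Ici q, (y - γ) ∂(gaussianReal 0 1) ≤
      ∫ y, max (y - γ) 0 ∂(gaussianReal 0 1) := fun γ =>
    calc ∫ y in Ici q, (y - γ) ∂(gaussianReal 0 1)
        ≤ ∫ y in Ici q, max (y - γ) 0 ∂(gaussianReal 0 1) :=
          setIntegral_mono (hi γ).integrableOn (hp γ).integrableOn fun y => le_max_left _ _
      _ ≤ ∫ y, max (y - γ) 0 ∂(gaussianReal 0 1) :=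
          setIntegral_le_integral (hp γ) (Filter.Eventually.of_forall fun y => le_max_right _ _)
  have heq : ∫ y in Ici q, (y - q) ∂(gaussianReal 0 1) =
      ∫ y, max (y - q) 0 ∂(gaussianReal 0 1) := by
    rw [← integral_indicator measurableSet_Ici]
    congr 1
    ext y
    by_cases hy : q ≤ y
    · rw [indicator_of_mem (mem_Ici.2 hy), max_eq_left (by linarith)]
    · rw [indicator_of_notMem (by simpa using hy), max_eq_right (by linarith)]
  have hlow : ∀ γ : ℝ, (1 - β)⁻¹ * ∫ y in Ici q, y ∂(gaussianReal 0 1) ≤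
      γ + (1 - β)⁻¹ * ∫ y, max (id y - γ) 0 ∂(gaussianReal 0 1) := by
    intro γ
    have h := hle γ
    rw [hsplit] at h
    have h2 := mul_le_mul_of_nonneg_left h (inv_pos.2 hβ).le
    rw [mul_sub, inv_mul_cancel_left₀ hβ.ne'] at h2
    simp only [id]
    linarith
  have hval : CVaR (gaussianReal 0 1) id β =
      (1 - β)⁻¹ * ∫ y in Ici q, y ∂(gaussianReal 0 1) := by
    apply le_antisymm
    · refine (ciInf_le ⟨_, forall_mem_range.2 hlow⟩ q).trans (le_of_eq ?_)
      simp only [id]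
      rw [← heq, hsplit, mul_sub, inv_mul_cancel_left₀ hβ.ne']
      ring
    · exact le_ciInf hlow
  rw [hval, mul_inv_cancel_left₀ hβ.ne']

lemma VaR_le_VaR {ε ε' : ℝ} (h1 : 0 < ε) (h2 : ε < ε') (h3 : ε' < 1) :
    VaR (gaussianReal 0 1) id ε ≤ VaR (gaussianReal 0 1) id ε' := by
  by_contra! hlt
  have h := measureReal_mono (μ := gaussianReal 0 1) (Iic_subset_Iic.2 hlt.le)
  rw [gaussian_Iic_VaR h1 (h2.trans h3), gaussian_Iic_VaR (h1.trans h2) h3] at h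
  linarith

lemma gaussian_Ico_VaR {ε ε' : ℝ} (h1 : 0 < ε) (h2 : ε < ε') (h3 : ε' < 1) :
    (gaussianReal 0 1).real
      (Ico (VaR (gaussianReal 0 1) id ε) (VaR (gaussianReal 0 1) id ε')) = ε' - ε := by
  have hq := VaR_le_VaR h1 h2 h3
  rw [← Ici_sdiff_Ici, measureReal_sdiff (Ici_subset_Ici.2 hq) measurableSet_Ici,
    gaussian_Ici_VaR h1 (h2.trans h3), gaussian_Ici_VaR (h1.trans h2) h3]
  ring

lemma CVaR_diff {ε ε' : ℝ} (h1 : 0 < ε) (h2 : ε < ε') (h3 : ε' < 1) :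
    (1 - ε') * CVaR (gaussianReal 0 1) id ε' - (1 - ε) * CVaR (gaussianReal 0 1) id ε =
      -∫ y in Ico (VaR (gaussianReal 0 1) id ε) (VaR (gaussianReal 0 1) id ε'),
        y ∂(gaussianReal 0 1) := by
  have hq := VaR_le_VaR h1 h2 h3
  rw [← Ici_sdiff_Ici, setIntegral_sdiff measurableSet_Ici integrable_id_gaussian.integrableOn
      (Ici_subset_Ici.2 hq),
    one_sub_mul_CVaR h1 (h2.trans h3), one_sub_mul_CVaR (h1.trans h2) h3]
  ring

lemma CVaR_diff_div_le {ε ε' : ℝ} (h1 : 0 < ε) (h2 : ε < ε') (h3 : ε' < 1) :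
    ((1 - ε') * CVaR (gaussianReal 0 1) id ε' - (1 - ε) * CVaR (gaussianReal 0 1) id ε) /
      (ε' - ε) ≤ -VaR (gaussianReal 0 1) id ε := by
  rw [CVaR_diff h1 h2 h3, neg_div, neg_le_neg_iff, le_div_iff₀ (by linarith),
    ← gaussian_Ico_VaR h1 h2 h3, mul_comm, ← smul_eq_mul, ← setIntegral_const]
  exact setIntegral_mono_on (integrable_const _).integrableOn integrable_id_gaussian.integrableOn
    measurableSet_Ico fun y hy => hy.1

/-- For a standard Gaussian `Y` and `0 < ε < ε' < 1`,
`((1−ε')·CVaR_{ε'}(Y) − (1−ε)·CVaR_ε(Y))/(ε' − ε) = −E[Y | Y ∈ [VaR_ε(Y), VaR_{ε'}(Y))]`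
`≤ −VaR_ε(Y)`; consequently `c_o ≤ −VaR_ε(Y)` for any `δ > 0`. -/
theorem stmt17 (ε ε' δ : ℝ) (h1 : 0 < ε) (h2 : ε < ε') (h3 : ε' < 1) (hδ : 0 < δ) :
    (((1 - ε') * CVaR (gaussianReal 0 1) id ε' - (1 - ε) * CVaR (gaussianReal 0 1) id ε) /
        (ε' - ε) =
      -((∫ y in Set.Ico (VaR (gaussianReal 0 1) id ε) (VaR (gaussianReal 0 1) id ε'),
            y ∂(gaussianReal 0 1)) /
          ((gaussianReal 0 1) (Set.Ico (VaR (gaussianReal 0 1) id ε)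
            (VaR (gaussianReal 0 1) id ε'))).toReal)) ∧
    (((1 - ε') * CVaR (gaussianReal 0 1) id ε' - (1 - ε) * CVaR (gaussianReal 0 1) id ε) /
        (ε' - ε) ≤ -VaR (gaussianReal 0 1) id ε) ∧
    sSup {r : ℝ | ∃ e ∈ Set.Ioo ε (1 : ℝ),
        r = (-δ + (1 - e) * CVaR (gaussianReal 0 1) id e
              - (1 - ε) * CVaR (gaussianReal 0 1) id ε) / (e - ε)} ≤
      -VaR (gaussianReal 0 1) id ε := by
  refine ⟨?_, CVaR_diff_div_le h1 h2 h3, ?_⟩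
  · rw [CVaR_diff h1 h2 h3, neg_div]
    congr 2
    exact (gaussian_Ico_VaR h1 h2 h3).symm
  · refine csSup_le ⟨_, ε', ⟨h2, h3⟩, rfl⟩ ?_
    rintro r ⟨e, ⟨he1, he2⟩, rfl⟩
    refine le_trans ?_ (CVaR_diff_div_le h1 he1 he2)
    exact div_le_div_of_nonneg_right (by linarith) (by linarith)

end
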